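/- The 4-arity SWAP cogate C = ⟨0000| + ⟨0101| + ⟨1010| + ⟨1111| is not Pfaffian under any change of basis: there do not exist invertible 2×2 complex matrices A, B, C, D, a scalar β ∈ ℂ, and a skew-symmetric matrix Θ ∈ ℂ^{4×4} such that the change of basis of the cogate under (A, B, C, D) equals β·sPf*(Θ). -/

import Mathlib

/-!
The SWAP cogate is `C(b) = [b₁ = b₃]·[b₂ = b₄]`, so after a change of basis it is still a product
`C′(b) = M(b₁,b₃)·N(b₂,b₄)`, where `M = A⁻ᵀC⁻¹` and `N = B⁻ᵀD⁻¹` are invertible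
(`cobCogate_swapCogate`). Suppose `C′ = β·sPf*(Θ)`. The coordinate `1111` gives `β = M₁₁N₁₁`, and
`β ≠ 0`, as otherwise `M ⊗ N` would vanish. The odd coordinates vanish, which, with
`M₁₁, N₁₁ ≠ 0`, forces `M₀₁ = N₀₁ = 0`, so `M₀₀, N₀₀ ≠ 0` by invertibility. Comparing the coordinates `1010`, `0101` and `0000` gives
`M₁₁N₀₀ = βΘ₂₄`, `M₀₀N₁₁ = βΘ₁₃` and `M₀₀N₀₀ = β(Θ₁₂Θ₃₄ - Θ₁₃Θ₂₄ + Θ₁₄Θ₂₃)`, where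
`Θ₁₂ = Θ₁₄ = 0` since `M₀₁ = 0` (coordinates `0011` and `0110`). Multiplying the first two,
`M₀₀N₀₀ = βΘ₁₃Θ₂₄`, the opposite of the third, so `M₀₀N₀₀ = 0`, a contradiction.
Indices of `M`, `N` start at zero, those of `Θ` here at one (at zero in the Lean terms).
-/

open scoped BigOperators

noncomputable section

/-- Change of basis on an `n`-arity gate: `((A₁⊗…⊗Aₙ)G)(b) = Σ_c (∏ᵢ Aᵢ(bᵢ,cᵢ))·G(c)`. -/
def cobGate {n : ℕ} (A : Fin n → Matrix (Fin 2) (Fin 2) ℂ) (G : (Fin n → Fin 2) → ℂ) :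
    (Fin n → Fin 2) → ℂ :=
  fun b => ∑ c : Fin n → Fin 2, (∏ i, A i (b i) (c i)) * G c

/-- Change of basis on an `n`-arity cogate: `C′(b) = Σ_c C(c)·∏ᵢ Aᵢ⁻¹(cᵢ,bᵢ)`. -/
def cobCogate {n : ℕ} (A : Fin n → Matrix (Fin 2) (Fin 2) ℂ) (C : (Fin n → Fin 2) → ℂ) :
    (Fin n → Fin 2) → ℂ :=
  fun b => ∑ c : Fin n → Fin 2, C c * ∏ i, (A i)⁻¹ (c i) (b i)

/-- The standard basis vector (ket/bra) at the bitstring `v`. -/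
def ket {n : ℕ} (v : Fin n → Fin 2) : (Fin n → Fin 2) → ℂ :=
  fun b => if b = v then 1 else 0

/-- The support of a bitstring. -/
def supp {n : ℕ} (b : Fin n → Fin 2) : Finset (Fin n) :=
  Finset.univ.filter fun i => b i = 1

/-- Fuel-driven Laplace expansion of the Pfaffian of a principal submatrix. -/
def subPfAux {n : ℕ} (Ξ : Matrix (Fin n) (Fin n) ℂ) : ℕ → Finset (Fin n) → ℂ
  | 0, I => if I = ∅ then 1 else 0
  | fuel + 1, I =>
    if hI : I.Nonempty then
      if Odd I.card then 0
      else
        ∑ i ∈ I.erase (I.min' hI),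
          (-1 : ℂ) ^ (I.filter fun j => j ≤ i).card * Ξ (I.min' hI) i *
            subPfAux Ξ fuel ((I.erase (I.min' hI)).erase i)
    else 1

/-- `subPf Ξ I` is the Pfaffian `Pf(Ξ|_I)` of the principal submatrix of `Ξ` on the
rows and columns in `I` (`1` on the empty set, `0` for odd `|I|`). -/
def subPf {n : ℕ} (Ξ : Matrix (Fin n) (Fin n) ℂ) (I : Finset (Fin n)) : ℂ :=
  subPfAux Ξ I.card I

/-- The sub-Pfaffian vector: coordinate `Pf(Ξ|_I)` at the bitstring with support `I`. -/
def sPf {n : ℕ} (Ξ : Matrix (Fin n) (Fin n) ℂ) : (Fin n → Fin 2) → ℂ :=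
  fun b => subPf Ξ (supp b)

/-- The dual sub-Pfaffian vector: coordinate `Pf(Θ|_{Jᶜ})` at the bitstring with support `J`. -/
def sPfStar {n : ℕ} (Θ : Matrix (Fin n) (Fin n) ℂ) : (Fin n → Fin 2) → ℂ :=
  fun b => subPf Θ (supp b)ᶜ

/-- A matrix is skew-symmetric. -/
def IsSkew {n : ℕ} (Ξ : Matrix (Fin n) (Fin n) ℂ) : Prop :=
  ∀ i j, Ξ j i = -Ξ i j

/-- A gate is Pfaffian under the change of basis `M`. -/
def IsPfaffGate {n : ℕ} (M : Fin n → Matrix (Fin 2) (Fin 2) ℂ) (G : (Fin n → Fin 2) → ℂ) : Prop :=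
  ∃ (α : ℂ) (Ξ : Matrix (Fin n) (Fin n) ℂ), IsSkew Ξ ∧ cobGate M G = fun b => α * sPf Ξ b

/-- A cogate is Pfaffian under the change of basis `M`. -/
def IsPfaffCogate {n : ℕ} (M : Fin n → Matrix (Fin 2) (Fin 2) ℂ) (C : (Fin n → Fin 2) → ℂ) : Prop :=
  ∃ (β : ℂ) (Θ : Matrix (Fin n) (Fin n) ℂ), IsSkew Θ ∧ cobCogate M C = fun b => β * sPfStar Θ b

/-- The 4-arity SWAP cogate. -/
def swapCogate : (Fin 4 → Fin 2) → ℂ :=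
  ket ![0, 0, 0, 0] + ket ![0, 1, 0, 1] + ket ![1, 0, 1, 0] + ket ![1, 1, 1, 1]

lemma cobCogate_swapCogate (A B C D : Matrix (Fin 2) (Fin 2) ℂ) (a b c d : Fin 2) :
    cobCogate ![A, B, C, D] swapCogate ![a, b, c, d] =
      ((A⁻¹).transpose * C⁻¹) a c * ((B⁻¹).transpose * D⁻¹) b d := by
  simp only [cobCogate, swapCogate, ket, Pi.add_apply, add_mul, Finset.sum_add_distrib, ite_mul,
    one_mul, zero_mul, Finset.sum_ite_eq', Finset.mem_univ, if_true]
  simp [Fin.prod_univ_four, Matrix.mul_apply, Fin.sum_univ_two]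
  ring

lemma subPf_eq_zero_of_odd {n : ℕ} (Θ : Matrix (Fin n) (Fin n) ℂ) (I : Finset (Fin n))
    (h : Odd I.card) : subPf Θ I = 0 := by
  have hI : I.Nonempty := Finset.card_pos.mp h.pos
  obtain ⟨k, hk⟩ : ∃ k, I.card = k + 1 := ⟨I.card - 1, by have := h.pos; omega⟩
  rw [subPf, hk, subPfAux, dif_pos hI, if_pos h]

lemma subPf_empty {n : ℕ} (Θ : Matrix (Fin n) (Fin n) ℂ) : subPf Θ ∅ = 1 := by
  simp [subPf, subPfAux]

lemma subPfAux_empty {n : ℕ} (Θ : Matrix (Fin n) (Fin n) ℂ) (k : ℕ) : subPfAux Θ k ∅ = 1 := by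
  cases k <;> simp [subPfAux]

/-- One step of the Laplace expansion along the least index `m` of an index set of even size. -/
lemma subPfAux_expand {n : ℕ} (Θ : Matrix (Fin n) (Fin n) ℂ) (I : Finset (Fin n)) (k : ℕ)
    (m : Fin n) (he : ¬ Odd I.card) (hm : m ∈ I) (hmin : ∀ j ∈ I, m ≤ j) :
    subPfAux Θ (k + 1) I = ∑ i ∈ I.erase m,
      (-1 : ℂ) ^ (I.filter fun j => j ≤ i).card * Θ m i * subPfAux Θ k ((I.erase m).erase i) := by
  have hI : I.Nonempty := ⟨m, hm⟩
  have hmm : I.min' hI = m := le_antisymm (I.min'_le m hm) (hmin _ (I.min'_mem hI))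
  rw [subPfAux, dif_pos hI, if_neg he, hmm]

/-- Any positive amount of fuel suffices on a pair; the expansion of a `4 × 4` Pfaffian reaches its
`2 × 2` sub-Pfaffians with three units left. -/
lemma subPfAux_pair {n : ℕ} (Θ : Matrix (Fin n) (Fin n) ℂ) (k : ℕ) {i j : Fin n} (hij : i < j) :
    subPfAux Θ (k + 1) {i, j} = Θ i j := by
  have hc : ({i, j} : Finset (Fin n)).card = 2 := Finset.card_pair hij.ne
  have h1 : ({i, j} : Finset (Fin n)).erase i = {j} := by grind
  have h2 : (({i, j} : Finset (Fin n)).filter fun x => x ≤ j) = {i, j} := by grind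
  rw [subPfAux_expand Θ _ k i (by rw [hc]; decide) (by simp) (by simp [hij.le]), h1]
  simp [h2, hc, subPfAux_empty]

lemma subPf_pair {n : ℕ} (Θ : Matrix (Fin n) (Fin n) ℂ) {i j : Fin n} (hij : i < j) :
    subPf Θ {i, j} = Θ i j := by
  rw [subPf, Finset.card_pair hij.ne, subPfAux_pair Θ 1 hij]

lemma subPf_univ_four (Θ : Matrix (Fin 4) (Fin 4) ℂ) :
    subPf Θ Finset.univ = Θ 0 1 * Θ 2 3 - Θ 0 2 * Θ 1 3 + Θ 0 3 * Θ 1 2 := by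
  have hc : (Finset.univ : Finset (Fin 4)).card = 4 := by simp
  rw [subPf, hc, subPfAux_expand Θ _ 3 0 (by decide) (by simp) (by simp)]
  have h0 : (Finset.univ : Finset (Fin 4)).erase 0 = {1, 2, 3} := by decide
  have h1 : ({1, 2, 3} : Finset (Fin 4)).erase 1 = {2, 3} := by decide
  have h2 : ({1, 2, 3} : Finset (Fin 4)).erase 2 = {1, 3} := by decide
  have h3 : ({1, 2, 3} : Finset (Fin 4)).erase 3 = {1, 2} := by decide
  have c1 : ((Finset.univ : Finset (Fin 4)).filter fun j => j ≤ 1).card = 2 := by decide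
  have c2 : ((Finset.univ : Finset (Fin 4)).filter fun j => j ≤ 2).card = 3 := by decide
  have c3 : ((Finset.univ : Finset (Fin 4)).filter fun j => j ≤ 3).card = 4 := by decide
  rw [h0, Finset.sum_insert (by decide), Finset.sum_insert (by decide), Finset.sum_singleton,
    h1, h2, h3, c1, c2, c3, subPfAux_pair Θ 2 (by decide), subPfAux_pair Θ 2 (by decide), subPfAux_pair Θ 2 (by decide)]
  ring

/-- Theorem 5.1.2: the SWAP cogate is not Pfaffian under any change of basis. -/
theorem stmt13 :
    ¬ ∃ (A B C D : Matrix (Fin 2) (Fin 2) ℂ) (β : ℂ) (Θ : Matrix (Fin 4) (Fin 4) ℂ),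
      IsUnit A.det ∧ IsUnit B.det ∧ IsUnit C.det ∧ IsUnit D.det ∧ IsSkew Θ ∧
      cobCogate ![A, B, C, D] swapCogate = fun b => β * sPfStar Θ b := by
  rintro ⟨A, B, C, D, β, Θ, hA, hB, hC, hD, -, h⟩
  set M := (A⁻¹).transpose * C⁻¹ with hM
  set N := (B⁻¹).transpose * D⁻¹ with hN
  have hMdet : M.det ≠ 0 := by
    rw [hM, Matrix.det_mul, Matrix.det_transpose]
    exact ((A.isUnit_nonsing_inv_det hA).mul (C.isUnit_nonsing_inv_det hC)).ne_zero
  have hNdet : N.det ≠ 0 := by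
    rw [hN, Matrix.det_mul, Matrix.det_transpose]
    exact ((B.isUnit_nonsing_inv_det hB).mul (D.isUnit_nonsing_inv_det hD)).ne_zero
  have hMN : ∀ a b c d : Fin 2, M a c * N b d = β * subPf Θ (supp ![a, b, c, d])ᶜ :=
    fun a b c d => (cobCogate_swapCogate A B C D a b c d).symm.trans (congrFun h ![a, b, c, d])
  clear_value M N
  have hβ : β ≠ 0 := by
    rintro rfl
    simp only [zero_mul, mul_eq_zero] at hMN
    have hN0 : N = 0 := by
      by_contra hN0
      obtain ⟨b, d, hbd⟩ : ∃ b d, N b d ≠ 0 := by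
        by_contra! hz
        exact hN0 (Matrix.ext hz)
      have hM0 : M = 0 := Matrix.ext fun a c => (hMN a b c d).resolve_right hbd
      exact hMdet (by simp [hM0])
    exact hNdet (by simp [hN0])
  have h1111 : M 1 1 * N 1 1 = β := by
    rw [hMN, show (supp ![1, 1, 1, 1] : Finset (Fin 4))ᶜ = ∅ by decide, subPf_empty, mul_one]
  have hM11 : M 1 1 ≠ 0 := left_ne_zero_of_mul (h1111 ▸ hβ)
  have hN11 : N 1 1 ≠ 0 := right_ne_zero_of_mul (h1111 ▸ hβ)
  have odd : ∀ a b c d : Fin 2, Odd (supp ![a, b, c, d])ᶜ.card → M a c * N b d = 0 :=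
    fun a b c d ho => by rw [hMN, subPf_eq_zero_of_odd Θ _ ho, mul_zero]
  have hM01 : M 0 1 = 0 := (mul_eq_zero.mp (odd 0 1 1 1 (by decide))).resolve_right hN11
  have hN01 : N 0 1 = 0 := (mul_eq_zero.mp (odd 1 0 1 1 (by decide))).resolve_left hM11
  have h1010 : M 1 1 * N 0 0 = β * Θ 1 3 := by
    rw [hMN, show (supp ![1, 0, 1, 0] : Finset (Fin 4))ᶜ = {1, 3} by decide,
      subPf_pair Θ (by decide)]
  have h0101 : M 0 0 * N 1 1 = β * Θ 0 2 := by
    rw [hMN, show (supp ![0, 1, 0, 1] : Finset (Fin 4))ᶜ = {0, 2} by decide,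
      subPf_pair Θ (by decide)]
  have hΘ01 : Θ 0 1 = 0 := by
    have h0011 := hMN 0 0 1 1
    rw [hM01, zero_mul, show (supp ![0, 0, 1, 1] : Finset (Fin 4))ᶜ = {0, 1} by decide,
      subPf_pair Θ (by decide)] at h0011
    exact (mul_eq_zero.mp h0011.symm).resolve_left hβ
  have hΘ03 : Θ 0 3 = 0 := by
    have h0110 := hMN 0 1 1 0
    rw [hM01, zero_mul, show (supp ![0, 1, 1, 0] : Finset (Fin 4))ᶜ = {0, 3} by decide,
      subPf_pair Θ (by decide)] at h0110
    exact (mul_eq_zero.mp h0110.symm).resolve_left hβ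
  have h0000 : M 0 0 * N 0 0 = -(β * (Θ 0 2 * Θ 1 3)) := by
    rw [hMN, show (supp ![0, 0, 0, 0] : Finset (Fin 4))ᶜ = Finset.univ by decide,
      subPf_univ_four, hΘ01, hΘ03]
    ring
  have hzero : M 0 0 * N 0 0 = 0 := by
    -- `β·M₀₀N₀₀ = (M₁₁N₀₀)(M₀₀N₁₁) = β²Θ₁₃Θ₂₄ = -β·M₀₀N₀₀`.
    have h2 : (2 * β) * (M 0 0 * N 0 0) = 0 := by
      linear_combination β * h0000 + M 0 0 * N 1 1 * h1010 + β * Θ 1 3 * h0101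
        - M 0 0 * N 0 0 * h1111
    exact (mul_eq_zero.mp h2).resolve_left (mul_ne_zero two_ne_zero hβ)
  rw [Matrix.det_fin_two, hM01, zero_mul, sub_zero] at hMdet
  rw [Matrix.det_fin_two, hN01, zero_mul, sub_zero] at hNdet
  exact mul_ne_zero (left_ne_zero_of_mul hMdet) (left_ne_zero_of_mul hNdet) hzero
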